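/- Let λ > 0, τ > 0, c > 0. Let N be a Poisson random variable with mean λτ, and, conditionally on N = k (for k ≥ 2), let Θ_(1) ≤ … ≤ Θ_(k) be distributed as the order statistics of k independent uniform random variables on [0, τ], independent across the conditioning. Define H = #{ i ∈ {2, …, N} : Θ_(i) − Θ_(i−1) < c } (with H = 0 when N ≤ 1). Then E[H] = λτ − 1 + e^{−λτ} if τ < c, and E[H] = (λτ − 1)(1 − e^{−λc}) + λc · e^{−λc} if τ ≥ c. -/

import Mathlib

/-!
Almost surely exactly one of the `k!` rearrangements of `k` independent atomless variables is
nondecreasing, so the order statistics of `k` uniform variables on `[0, τ]` are uniform on the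
simplex `0 ≤ w₁ ≤ ⋯ ≤ w_k ≤ τ`, of volume `τ ^ k / k!`. Moving all points after a given gap down by
`c` is a translation of the part of this simplex where the gap is at least `c` onto the simplex for
`[0, τ - c]`. Hence each of the `k - 1` gaps is at least `c` with probability `q ^ k`, where
`q = max (1 - c / τ) 0`. Averaging `(k - 1) * (1 - q ^ k)` over a Poisson law of mean `a = lam * τ`
gives `a - 1 - (a * q - 1) * exp (a * q - a)`; the two cases of the theorem are `q = 0` and
`q = 1 - c / τ`.
-/

open MeasureTheory Real

/-- The law of the order statistics of `k` i.i.d. uniform random variables on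
`[0, τ]`: the pushforward of the product of uniform measures under the sorting
map. -/
noncomputable def orderStatisticsLaw (τ : ℝ) (k : ℕ) : Measure (Fin k → ℝ) :=
  Measure.map (fun u : Fin k → ℝ => fun i => u (Tuple.sort u i))
    (Measure.pi fun _ : Fin k =>
      (ENNReal.ofReal τ)⁻¹ • volume.restrict (Set.Icc (0 : ℝ) τ))

section PiMeasure

variable {ι α : Type*} [Fintype ι] [MeasurableSpace α]

theorem pi_smul_eq_prod_smul_pi {X : ι → Type*} [∀ i, MeasurableSpace (X i)]
    (μ : ∀ i, Measure (X i)) [∀ i, SigmaFinite (μ i)] {r : ι → ENNReal} (hr : ∀ i, r i ≠ ⊤) :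
    (Measure.pi fun i => r i • μ i) = (∏ i, r i) • Measure.pi μ := by
  lift r to ι → NNReal using hr
  have (i : ι) : SigmaFinite ((r i : ENNReal) • μ i) := SMul.sigmaFinite (r i)
  refine Measure.pi_eq fun s _ => ?_
  simp only [Measure.smul_apply, Measure.pi_pi, smul_eq_mul, Finset.prod_mul_distrib]

theorem ae_pi_injective [MeasurableEq α] (μ : Measure α) [SigmaFinite μ] [NullSingletonClass μ]
    (k : ℕ) : ∀ᵐ u ∂Measure.pi fun _ : Fin k => μ, Function.Injective u := by
  have hne : ∀ i l : Fin k, i ≠ l → ∀ᵐ u ∂Measure.pi fun _ : Fin k => μ, u i ≠ u l := by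
    intro i l hil
    cases k with
    | zero => exact i.elim0
    | succ n =>
      obtain ⟨m, rfl⟩ := Fin.exists_succAbove_eq hil.symm
      have hae : ∀ᵐ p ∂μ.prod (Measure.pi fun _ : Fin n => μ), p.1 ≠ p.2 m := by
        refine (Measure.ae_prod_iff_ae_ae ?_).2 (.of_forall fun x => ?_)
        · exact (measurableSet_eq_fun (by fun_prop) (by fun_prop)).compl
        · exact (Measure.ae_eval_ne (fun _ : Fin n => μ) m x).mono fun _ h => h.symm
      exact (measurePreserving_piFinSuccAbove (fun _ => μ) i).quasiMeasurePreserving.ae hae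
  have hall : ∀ᵐ u ∂Measure.pi fun _ : Fin k => μ, ∀ i l, i ≠ l → u i ≠ u l := by
    simpa only [ae_all_iff] using hne
  exact hall.mono fun u hu i l => not_imp_not.1 (hu i l)

end PiMeasure

section Sorting

variable {α : Type*} [LinearOrder α] {k : ℕ}

theorem preimage_sort_eq_iUnion (A : Set (Fin k → α)) :
    (fun (u : Fin k → α) i => u (Tuple.sort u i)) ⁻¹' A =
      ⋃ σ : Equiv.Perm (Fin k), (· ∘ σ) ⁻¹' (A ∩ {w | Monotone w}) := by
  ext u
  rw [Set.mem_iUnion]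
  constructor
  · exact fun hu => ⟨Tuple.sort u, hu, Tuple.monotone_sort u⟩
  · rintro ⟨σ, (hA : u ∘ σ ∈ A), hmono⟩
    rw [Tuple.comp_sort_eq_comp_iff_monotone.2 hmono] at hA
    exact hA

variable [TopologicalSpace α] [OrderClosedTopology α] [SecondCountableTopology α]
  [MeasurableSpace α] [OpensMeasurableSpace α]

theorem measurableSet_monotone : MeasurableSet {w : Fin k → α | Monotone w} :=
  isClosed_monotone.measurableSet

theorem measurable_sort : Measurable fun (u : Fin k → α) i => u (Tuple.sort u i) := by
  intro A hA
  rw [preimage_sort_eq_iUnion]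
  exact .iUnion fun σ =>
    measurable_pi_lambda _ (fun i => measurable_pi_apply (σ i)) (hA.inter measurableSet_monotone)

theorem map_sort_pi (μ : Measure α) [SigmaFinite μ] [NullSingletonClass μ] :
    (Measure.pi fun _ : Fin k => μ).map (fun u i => u (Tuple.sort u i)) =
      k.factorial • (Measure.pi fun _ : Fin k => μ).restrict {w | Monotone w} := by
  ext A hA
  have hB : MeasurableSet (A ∩ {w | Monotone w}) := hA.inter measurableSet_monotone
  have hperm (σ : Equiv.Perm (Fin k)) : MeasurePreserving (· ∘ σ)
      (Measure.pi fun _ : Fin k => μ) (Measure.pi fun _ : Fin k => μ) :=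
    measurePreserving_arrowCongr' (fun _ => μ) (fun _ => μ) σ.symm (.refl α) fun _ => .id μ
  have hdisj : Pairwise (Function.onFun (AEDisjoint (Measure.pi fun _ : Fin k => μ))
      fun σ : Equiv.Perm (Fin k) => (· ∘ σ) ⁻¹' (A ∩ {w | Monotone w})) := by
    intro σ ρ hσρ
    refine measure_mono_null ?_ (ae_pi_injective μ k)
    rintro u ⟨⟨-, hσ⟩, -, hρ⟩ (hu : Function.Injective u)
    exact hσρ (Equiv.ext fun i => hu (congrFun (Tuple.unique_monotone hσ hρ) i))
  rw [Measure.map_apply measurable_sort hA, preimage_sort_eq_iUnion,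
    measure_iUnion₀ hdisj fun σ => ((hperm σ).measurable hB).nullMeasurableSet, tsum_fintype]
  simp_rw [(hperm _).measure_preimage hB.nullMeasurableSet]
  simp [Measure.restrict_apply hA, Fintype.card_perm]

end Sorting

section OrderStatistics

/-- The nondecreasing `k`-tuples with values in `[0, τ]`. Up to normalization, the law of the
order statistics of `k` independent uniform variables is Lebesgue measure on this simplex. -/
def monotoneBox (τ : ℝ) (k : ℕ) : Set (Fin k → ℝ) :=
  {w | Monotone w} ∩ Set.univ.pi fun _ => Set.Icc 0 τ

theorem map_sort_pi_restrict_Icc (τ : ℝ) (k : ℕ) :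
    (Measure.pi fun _ : Fin k => volume.restrict (Set.Icc 0 τ)).map
      (fun u i => u (Tuple.sort u i)) = k.factorial • volume.restrict (monotoneBox τ k) := by
  rw [map_sort_pi, ← Measure.restrict_pi_pi, Measure.restrict_restrict measurableSet_monotone]
  rfl

theorem factorial_mul_volume_monotoneBox (τ : ℝ) (k : ℕ) :
    k.factorial * volume (monotoneBox τ k) = ENNReal.ofReal τ ^ k := by
  have h := congrArg (· Set.univ) (map_sort_pi_restrict_Icc τ k)
  simpa [Measure.map_apply measurable_sort, Measure.pi_univ] using h.symm

theorem orderStatisticsLaw_eq_smul_restrict {τ : ℝ} (hτ : 0 < τ) (k : ℕ) :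
    orderStatisticsLaw τ k =
      (ENNReal.ofReal τ)⁻¹ ^ k • k.factorial • volume.restrict (monotoneBox τ k) := by
  rw [orderStatisticsLaw, pi_smul_eq_prod_smul_pi _ fun _ => by simpa using hτ, Measure.map_smul,
    Finset.prod_const, Finset.card_univ, Fintype.card_fin, map_sort_pi_restrict_Icc]

theorem isProbabilityMeasure_orderStatisticsLaw {τ : ℝ} (hτ : 0 < τ) (k : ℕ) :
    IsProbabilityMeasure (orderStatisticsLaw τ k) := by
  constructor
  simp [orderStatisticsLaw_eq_smul_restrict hτ, factorial_mul_volume_monotoneBox, ← mul_pow,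
    ENNReal.inv_mul_cancel, hτ]

theorem mem_monotoneBox_succ_iff {τ : ℝ} {n : ℕ} {w : Fin (n + 1) → ℝ} :
    w ∈ monotoneBox τ (n + 1) ↔
      (∀ i : Fin n, w i.castSucc ≤ w i.succ) ∧ 0 ≤ w 0 ∧ w (Fin.last n) ≤ τ := by
  rw [← Fin.monotone_iff_le_succ]
  refine and_congr_right fun hw => ⟨fun h => ⟨(h 0 trivial).1, (h (Fin.last n) trivial).2⟩, ?_⟩
  exact fun h i _ => ⟨h.1.trans (hw (Fin.zero_le i)), (hw (Fin.le_last i)).trans h.2⟩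

theorem volume_gap_ge_inter_monotoneBox {n : ℕ} (τ : ℝ) {c : ℝ} (hc : 0 ≤ c) (j : Fin n) :
    volume ({w | c ≤ w j.succ - w j.castSucc} ∩ monotoneBox τ (n + 1)) =
      volume (monotoneBox (τ - c) (n + 1)) := by
  -- Closing the gap by `c`, that is, moving all later points down by `c`, is a translation.
  let shift : Fin (n + 1) → ℝ := fun i => if j.castSucc < i then c else 0
  have hshift (i : Fin n) : shift i.succ = shift i.castSucc + if i = j then c else 0 := by
    simp only [shift]
    grind
  have hzero : shift 0 = 0 := if_neg (Fin.not_lt_zero _)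
  have hlast : shift (Fin.last n) = c := if_pos (Fin.castSucc_lt_last j)
  rw [← measure_preimage_add volume shift]
  congr 1
  ext v
  simp only [Set.mem_preimage, Set.mem_inter_iff, Set.mem_ofPred_eq, mem_monotoneBox_succ_iff,
    Pi.add_apply, hshift, hzero, hlast]
  grind

theorem orderStatisticsLaw_gap_ge {n : ℕ} {τ c : ℝ} (hτ : 0 < τ) (hc : 0 ≤ c) (j : Fin n) :
    orderStatisticsLaw τ (n + 1) {w | c ≤ w j.succ - w j.castSucc} =
      ENNReal.ofReal (1 - c / τ) ^ (n + 1) := by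
  have hgap : MeasurableSet {w : Fin (n + 1) → ℝ | c ≤ w j.succ - w j.castSucc} :=
    measurableSet_le (by fun_prop) (by fun_prop)
  rw [orderStatisticsLaw_eq_smul_restrict hτ, Measure.smul_apply, Measure.smul_apply,
    Measure.restrict_apply hgap, volume_gap_ge_inter_monotoneBox τ hc, nsmul_eq_mul,
    factorial_mul_volume_monotoneBox, smul_eq_mul, ← mul_pow, ← ENNReal.ofReal_inv_of_pos hτ,
    ← ENNReal.ofReal_mul (by positivity)]
  congr 2
  field_simp

theorem orderStatisticsLaw_gap_lt {n : ℕ} {τ c : ℝ} (hτ : 0 < τ) (hc : 0 ≤ c) (j : Fin n) :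
    orderStatisticsLaw τ (n + 1) {w | w j.succ - w j.castSucc < c} =
      ENNReal.ofReal (1 - max (1 - c / τ) 0 ^ (n + 1)) := by
  have := isProbabilityMeasure_orderStatisticsLaw hτ (n + 1)
  have hgap : MeasurableSet {w : Fin (n + 1) → ℝ | c ≤ w j.succ - w j.castSucc} :=
    measurableSet_le (by fun_prop) (by fun_prop)
  have hcompl : {w : Fin (n + 1) → ℝ | w j.succ - w j.castSucc < c} =
      {w | c ≤ w j.succ - w j.castSucc}ᶜ := by
    ext w
    simp
  rw [hcompl, prob_compl_eq_one_sub hgap, orderStatisticsLaw_gap_ge hτ hc,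
    ENNReal.ofReal_sub 1 (pow_nonneg (le_max_right (1 - c / τ) 0) _), ENNReal.ofReal_one,
    ENNReal.ofReal_pow (le_max_right _ _), ENNReal.ofReal_max, ENNReal.ofReal_zero,
    max_eq_left zero_le]

end OrderStatistics

section RandomIndexSet

variable {Ω κ ι : Type*} {N : Ω → κ} {p : Ω → ι → Prop} [∀ ω, DecidablePred (p ω)]

theorem card_filter_eq_tsum_indicator (s : κ → Finset ι) (ω : Ω) :
    (((s (N ω)).filter (p ω)).card : ENNReal) =
      ∑' k, ∑ j ∈ s k, {ω | N ω = k ∧ p ω j}.indicator 1 ω := by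
  rw [tsum_eq_single (N ω) fun k hk => Finset.sum_eq_zero fun j _ =>
    Set.indicator_of_notMem (fun h => hk h.1.symm) _]
  simp [Set.indicator, Finset.sum_boole]

variable [MeasurableSpace Ω] [MeasurableSpace κ] [Countable κ] [MeasurableSingletonClass κ]

theorem integral_card_filter (P : Measure Ω) (s : κ → Finset ι) (hN : Measurable N)
    (hp : ∀ j, MeasurableSet {ω | p ω j}) :
    ∫ ω, (((s (N ω)).filter (p ω)).card : ℝ) ∂P =
      (∑' k, ∑ j ∈ s k, P {ω | N ω = k ∧ p ω j}).toReal := by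
  have hm (k : κ) (j : ι) : MeasurableSet {ω | N ω = k ∧ p ω j} :=
    (hN (measurableSet_singleton k)).inter (hp j)
  have hsum (k : κ) : Measurable fun ω =>
      ∑ j ∈ s k, {ω | N ω = k ∧ p ω j}.indicator (1 : Ω → ENNReal) ω :=
    Finset.measurable_fun_sum _ fun j _ => measurable_one.indicator (hm k j)
  have hcard : AEMeasurable (fun ω => (((s (N ω)).filter (p ω)).card : ENNReal)) P := by
    refine Measurable.aemeasurable ?_
    simpa only [card_filter_eq_tsum_indicator] using Measurable.tsum hsum
  calc ∫ ω, (((s (N ω)).filter (p ω)).card : ℝ) ∂P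
      = (∫⁻ ω, (((s (N ω)).filter (p ω)).card : ENNReal) ∂P).toReal := by
        simpa using integral_toReal hcard (.of_forall fun _ => ENNReal.natCast_lt_top _)
    _ = (∑' k, ∑ j ∈ s k, P {ω | N ω = k ∧ p ω j}).toReal := by
        simp_rw [card_filter_eq_tsum_indicator]
        rw [lintegral_tsum fun k => (hsum k).aemeasurable]
        simp_rw [lintegral_finsetSum _ fun j _ => measurable_one.indicator (hm _ j),
          lintegral_indicator_one (hm _ _)]

end RandomIndexSet

section Poisson

theorem hasSum_natCast_sub_one_mul_pow_div_factorial (x : ℝ) :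
    HasSum (fun k : ℕ => ((k : ℝ) - 1) * (x ^ k / k.factorial)) ((x - 1) * exp x) := by
  have hexp : HasSum (fun k : ℕ => x ^ k / (k.factorial : ℝ)) (exp x) := by
    rw [exp_eq_exp_ℝ]
    exact NormedSpace.expSeries_div_hasSum_exp x
  have hmean : HasSum (fun k : ℕ => (k : ℝ) * (x ^ k / k.factorial)) (x * exp x) := by
    rw [← hasSum_nat_add_iff' 1]
    simp only [Finset.range_one, Finset.sum_singleton, Nat.cast_zero, zero_mul, sub_zero]
    refine (hexp.mul_left x).congr_fun fun k => ?_
    rw [Nat.factorial_succ]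
    push_cast
    field_simp
    ring
  simpa only [sub_mul, one_mul] using hmean.sub hexp

theorem hasSum_poisson_mul_natCast_sub_one_mul_one_sub_pow (a q : ℝ) :
    HasSum (fun k : ℕ => exp (-a) * a ^ k / k.factorial * (((k : ℝ) - 1) * (1 - q ^ k)))
      (a - 1 - (a * q - 1) * exp (a * q - a)) := by
  have hval : a - 1 - (a * q - 1) * exp (a * q - a) =
      exp (-a) * ((a - 1) * exp a - (a * q - 1) * exp (a * q)) := by
    rw [sub_eq_add_neg (a * q) a, exp_add, exp_neg]
    field_simp
  rw [hval]
  refine (((hasSum_natCast_sub_one_mul_pow_div_factorial a).sub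
    (hasSum_natCast_sub_one_mul_pow_div_factorial (a * q))).mul_left (exp (-a))).congr_fun
      fun k => ?_
  rw [mul_pow]
  ring

theorem integral_card_filter_range_of_poisson {Ω : Type*} [MeasurableSpace Ω] (P : Measure Ω)
    {N : Ω → ℕ} {p : Ω → ℕ → Prop} [∀ ω, DecidablePred (p ω)] {a q : ℝ} (ha : 0 ≤ a)
    (hq₀ : 0 ≤ q) (hq₁ : q ≤ 1) (hNmeas : Measurable N) (hp : ∀ j, MeasurableSet {ω | p ω j})
    (hN : ∀ k : ℕ, P {ω | N ω = k} = ENNReal.ofReal (exp (-a) * a ^ k / k.factorial))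
    (hNp : ∀ k, ∀ j < k - 1, P {ω | N ω = k ∧ p ω j} =
      P {ω | N ω = k} * ENNReal.ofReal (1 - q ^ k)) :
    ∫ ω, (((Finset.range (N ω - 1)).filter (p ω)).card : ℝ) ∂P =
      a - 1 - (a * q - 1) * exp (a * q - a) := by
  have hnonneg (k : ℕ) : 0 ≤ exp (-a) * a ^ k / k.factorial * (((k : ℝ) - 1) * (1 - q ^ k)) := by
    rcases k.eq_zero_or_pos with rfl | hk
    · simp
    · have hk' : (1 : ℝ) ≤ k := mod_cast hk
      exact mul_nonneg (by positivity)
        (mul_nonneg (sub_nonneg.2 hk') (sub_nonneg.2 (pow_le_one₀ hq₀ hq₁)))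
  have hterm (k : ℕ) : ∑ j ∈ Finset.range (k - 1), P {ω | N ω = k ∧ p ω j} =
      ENNReal.ofReal (exp (-a) * a ^ k / k.factorial * (((k : ℝ) - 1) * (1 - q ^ k))) := by
    rw [Finset.sum_congr rfl fun j hj => hNp k j (Finset.mem_range.1 hj), Finset.sum_const,
      Finset.card_range, nsmul_eq_mul, hN, ← ENNReal.ofReal_mul (by positivity),
      ← ENNReal.ofReal_natCast, ← ENNReal.ofReal_mul (by positivity)]
    rcases k.eq_zero_or_pos with rfl | hk
    · simp
    · rw [Nat.cast_pred hk]
      congr 1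
      ring
  have hsum := hasSum_poisson_mul_natCast_sub_one_mul_one_sub_pow a q
  rw [integral_card_filter P (fun k => Finset.range (k - 1)) hNmeas hp, tsum_congr hterm,
    ← ENNReal.ofReal_tsum_of_nonneg hnonneg hsum.summable, hsum.tsum_eq,
    ENNReal.toReal_ofReal (hsum.nonneg hnonneg)]

end Poisson

/-- Proposition 3 (Che approximation for the Box Model): a document with
lifespan `τ` and rate `lam` receives a Poisson(`lam·τ`) number `N` of requests
whose times, given `N = k` (for `k ≥ 2`), are the order statistics of `k`
i.i.d. uniforms on `[0, τ]`; a request is a hit when the gap to the previous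
request is `< c`.  Then the expected number of hits is
`λτ − 1 + e^{−λτ}` if `τ < c`, and
`(λτ − 1)(1 − e^{−λc}) + λc e^{−λc}` if `τ ≥ c`. -/
theorem che_approximation_box_model
    {Ω : Type*} [MeasurableSpace Ω] (P : Measure Ω) [IsProbabilityMeasure P]
    (lam τ c : ℝ) (hlam : 0 < lam) (hτ : 0 < τ) (hc : 0 < c)
    (N : Ω → ℕ) (Θ : Ω → ℕ → ℝ) (hNmeas : Measurable N)
    (hΘmeas : ∀ i, Measurable fun ω => Θ ω i)
    (hN : ∀ k : ℕ, P {ω | N ω = k} =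
      ENNReal.ofReal (Real.exp (-(lam * τ)) * (lam * τ) ^ k / (Nat.factorial k)))
    (hcond : ∀ k : ℕ, 2 ≤ k → ∀ A : Set (Fin k → ℝ), MeasurableSet A →
      P {ω | N ω = k ∧ (fun i : Fin k => Θ ω i.1) ∈ A} =
        P {ω | N ω = k} * orderStatisticsLaw τ k A) :
    (τ < c →
      ∫ ω, (((Finset.range (N ω - 1)).filter
          (fun j => Θ ω (j + 1) - Θ ω j < c)).card : ℝ) ∂P
        = lam * τ - 1 + Real.exp (-(lam * τ))) ∧
    (c ≤ τ →
      ∫ ω, (((Finset.range (N ω - 1)).filter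
          (fun j => Θ ω (j + 1) - Θ ω j < c)).card : ℝ) ∂P
        = (lam * τ - 1) * (1 - Real.exp (-(lam * c)))
          + lam * c * Real.exp (-(lam * c))) := by
  have hgap : ∀ k, ∀ j < k - 1, P {ω | N ω = k ∧ Θ ω (j + 1) - Θ ω j < c} =
      P {ω | N ω = k} * ENNReal.ofReal (1 - max (1 - c / τ) 0 ^ k) := by
    rintro (_ | n) j hj
    · exact absurd hj j.not_lt_zero
    · lift j to Fin n using hj
      rw [← orderStatisticsLaw_gap_lt hτ hc.le j]
      exact hcond (n + 1) (by have := j.pos; omega) {w | w j.succ - w j.castSucc < c}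
        (measurableSet_lt (by fun_prop) (by fun_prop))
  have hmeas (j : ℕ) : MeasurableSet {ω | Θ ω (j + 1) - Θ ω j < c} :=
    measurableSet_lt (by fun_prop) measurable_const
  have hq : max (1 - c / τ) 0 ≤ 1 := max_le (sub_le_self _ (by positivity)) zero_le_one
  rw [integral_card_filter_range_of_poisson P (by positivity) (le_max_right _ _) hq hNmeas
    hmeas hN hgap]
  constructor
  · intro hlt
    rw [max_eq_right (sub_nonpos.2 ((one_le_div hτ).2 hlt.le))]
    ring_nf
  · intro hle
    have hmul : lam * τ * (1 - c / τ) = lam * τ - lam * c := by field_simp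
    rw [max_eq_left (sub_nonneg.2 ((div_le_one hτ).2 hle)), hmul]
    ring_nf
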